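/- Let (X,d,μ) be a space of homogeneous type, let p(·) be an exponent function with p(·) ∈ LH (with limit value p_∞), and let w ∈ A_{p(·)}. Then there exist constants c, C > 0 such that for every quasi-metric ball B with ‖w χ_B‖_{p(·)} ≥ 1, one has c·W(B)^{1/p_∞} ≤ ‖w χ_B‖_{p(·)} ≤ C·W(B)^{1/p_∞}, where W(B) = ∫_B w(x)^{p(x)} dμ. -/

import Mathlib

open MeasureTheory ENNReal NNReal Filter

namespace SHT

variable {X : Type*} [MeasurableSpace X]

/-- The quasi-metric ball `B(x,r) = {y | d x y < r}`. -/
def ball (d : X → X → ℝ) (x : X) (r : ℝ) : Set X := {y | d x y < r}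

/-- `(X, d, μ)` is a space of homogeneous type with quasi-metric constant `A₀`
and doubling constant `Cμ`. -/
structure IsSHT (d : X → X → ℝ) (μ : Measure X) (A₀ Cμ : ℝ) : Prop where
  d_nonneg : ∀ x y, 0 ≤ d x y
  d_eq_zero_iff : ∀ x y, d x y = 0 ↔ x = y
  d_symm : ∀ x y, d x y = d y x
  one_le_A₀ : 1 ≤ A₀
  d_triangle : ∀ x y z, d x y ≤ A₀ * (d x z + d z y)
  one_le_Cμ : 1 ≤ Cμ
  measurableSet_ball : ∀ x r, MeasurableSet (ball d x r)
  ball_pos : ∀ x r, 0 < r → 0 < μ (ball d x r)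
  ball_ne_top : ∀ x r, 0 < r → μ (ball d x r) ≠ ⊤
  doubling : ∀ x r, 0 < r → μ (ball d x (2 * r)) ≤ ENNReal.ofReal Cμ * μ (ball d x r)

/-- The modular `ρ_{p(·)}(f) = ∫_{X ∖ X_∞} f(x)^{p(x)} dμ + ‖f‖_{L^∞(X_∞)}`
for an (extended-real valued) exponent `p` and a nonnegative function `f`. -/
noncomputable def modular (μ : Measure X) (p : X → ℝ≥0∞) (f : X → ℝ≥0∞) : ℝ≥0∞ :=
  (∫⁻ x in {x | p x ≠ ⊤}, f x ^ (p x).toReal ∂μ) + essSup f (μ.restrict {x | p x = ⊤})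

/-- The Luxemburg norm `‖f‖_{p(·)} = inf {λ > 0 | ρ_{p(·)}(f/λ) ≤ 1}`. -/
noncomputable def luxNorm (μ : Measure X) (p : X → ℝ≥0∞) (f : X → ℝ≥0∞) : ℝ≥0∞ :=
  sInf {lam : ℝ≥0∞ | 0 < lam ∧ modular μ p (fun x => f x / lam) ≤ 1}

/-- The pointwise conjugate exponent `p'(x) = p(x)/(p(x)-1)`, with the conventions
`p'(x) = ∞` if `p(x) = 1` and `p'(x) = 1` if `p(x) = ∞`. -/
noncomputable def conjExp (p : X → ℝ≥0∞) : X → ℝ≥0∞ := fun x =>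
  if p x = ⊤ then 1 else p x / (p x - 1)

/-- A real-valued exponent function viewed as an extended-real valued one. -/
noncomputable def ofRealExp (p : X → ℝ) : X → ℝ≥0∞ := fun x => ENNReal.ofReal (p x)

/-- Local log-Hölder continuity of an exponent function. -/
def LH0 (d : X → X → ℝ) (p : X → ℝ) : Prop :=
  ∃ C₀ : ℝ, 0 < C₀ ∧ ∀ x y, 0 < d x y → d x y < 1 / 2 →
    |p x - p y| ≤ C₀ / (-Real.log (d x y))

/-- Log-Hölder continuity at infinity, with respect to the base point `x₀`
and with limit value `pinf`. -/
def LHinf (d : X → X → ℝ) (x₀ : X) (p : X → ℝ) (pinf : ℝ) : Prop :=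
  ∃ Cinf : ℝ, 0 < Cinf ∧ ∀ x, |p x - pinf| ≤ Cinf / Real.log (Real.exp 1 + d x x₀)

/-- Global log-Hölder continuity. -/
def LH (d : X → X → ℝ) (x₀ : X) (p : X → ℝ) : Prop :=
  LH0 d p ∧ ∃ pinf : ℝ, LHinf d x₀ p pinf

/-- `w` is a weight: measurable, positive and finite a.e., and locally integrable. -/
def IsWeight (d : X → X → ℝ) (μ : Measure X) (w : X → ℝ≥0∞) : Prop :=
  Measurable w ∧ (∀ᵐ x ∂μ, 0 < w x ∧ w x < ⊤) ∧
    ∀ (x : X) (r : ℝ), 0 < r → (∫⁻ y in ball d x r, w y ∂μ) ≠ ⊤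

/-- The variable Muckenhoupt condition `w ∈ A_{p(·)}`:
`‖w χ_B‖_{p(·)} ‖w⁻¹ χ_B‖_{p'(·)} ≤ K μ(B)` for all quasi-metric balls `B`. -/
def Apvar (d : X → X → ℝ) (μ : Measure X) (p : X → ℝ≥0∞) (w : X → ℝ≥0∞) : Prop :=
  ∃ K : ℝ≥0, ∀ (x : X) (r : ℝ), 0 < r →
    luxNorm μ p ((ball d x r).indicator w) *
      luxNorm μ (conjExp p) ((ball d x r).indicator fun y => (w y)⁻¹) ≤ K * μ (ball d x r)

/-- The uncentered Hardy–Littlewood maximal operator over quasi-metric balls. -/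
noncomputable def maximal (d : X → X → ℝ) (μ : Measure X) (f : X → ℝ≥0∞) (x : X) : ℝ≥0∞ :=
  ⨆ (z : X) (r : ℝ) (_ : 0 < r ∧ x ∈ ball d z r),
    (μ (ball d z r))⁻¹ * ∫⁻ y in ball d z r, f y ∂μ

/-- `f ∈ L^{p(·)}`: the modular of `f/λ` is finite for some `λ > 0`. -/
def MemLpvar (μ : Measure X) (p : X → ℝ≥0∞) (f : X → ℝ≥0∞) : Prop :=
  ∃ lam : ℝ≥0∞, 0 < lam ∧ modular μ p (fun x => f x / lam) < ⊤

/-!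
Let `f = w χ_E` and `L = ‖f‖_{p(·)} ≥ 1`. Since `p` is bounded, `∫ (f / L)^p = 1`. If
`L ^ |p - p_∞| ≤ H` held everywhere, then `f ^ p` and `L ^ p_∞ (f / L)^p` would agree up to the
factor `H`, so that `∫ f ^ p` would be comparable to `L ^ p_∞`. By log-Hölder continuity at infinity
this bound holds wherever `log L ≲ log (e + d(x, x₀))`, that is, off a ball `S` about `x₀` whose
radius is a power of `L`. By the `A_{p(·)}` condition and doubling, the norm of `w χ_B`, and
hence `∫_B w ^ p`, grows at most polynomially with the radius of `B = B(x₀, R)`, so that the radius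
of `S` can be chosen with `∫_S f ^ p ≤ L / 2`. Such an `S` is harmless: `f ^ p ≥ L (f / L)^p`, so
it carries at most half of `∫ (f / L)^p = 1`, and `∫ f ^ p` is at least `L`.
-/

open scoped Topology

section Modular

variable {μ : Measure X} {q : X → ℝ≥0∞} {f g : X → ℝ≥0∞}

lemma modular_mono (h : f ≤ g) : modular μ q f ≤ modular μ q g :=
  add_le_add (lintegral_mono fun x => rpow_le_rpow (h x) toReal_nonneg)
    (essSup_mono_ae (ae_of_all _ h))

lemma luxNorm_mono (h : f ≤ g) : luxNorm μ q f ≤ luxNorm μ q g :=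
  sInf_le_sInf fun _ hlam =>
    ⟨hlam.1, (modular_mono fun x => ENNReal.div_le_div_right (h x) _).trans hlam.2⟩

lemma modular_div_le_one_of_luxNorm_lt {lam : ℝ≥0∞} (h : luxNorm μ q f < lam) :
    modular μ q (fun x => f x / lam) ≤ 1 := by
  obtain ⟨lam', ⟨-, hmod⟩, hlt⟩ := sInf_lt_iff.1 h
  exact (modular_mono fun x => ENNReal.div_le_div_left hlt.le (f x)).trans hmod

lemma one_lt_modular_div_of_lt_luxNorm {lam : ℝ≥0∞} (hlam : 0 < lam) (h : lam < luxNorm μ q f) :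
    1 < modular μ q (fun x => f x / lam) := by
  by_contra! hmod
  exact h.not_ge (sInf_le ⟨hlam, hmod⟩)

lemma modular_const_mul_le (hqm : Measurable q) (hq1 : ∀ x, 1 ≤ q x) {c : ℝ≥0∞} (hc : c ≤ 1) :
    modular μ q (fun x => c * f x) ≤ c * modular μ q f := by
  have hfinite : MeasurableSet {x | q x ≠ ⊤} := (hqm (measurableSet_singleton ⊤)).compl
  unfold modular
  rw [mul_add, ← lintegral_const_mul' _ _ (ne_top_of_le_ne_top one_ne_top hc),
    ← essSup_const_mul]
  refine add_le_add (setLIntegral_mono' hfinite fun x hx => ?_) le_rfl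
  rw [mul_rpow_of_nonneg _ _ toReal_nonneg]
  gcongr
  exact rpow_le_self_of_le_one hc ((ENNReal.toReal_mono hx (hq1 x)).trans' (by simp))

lemma ae_eq_zero_of_modular_eq_zero (hqm : Measurable q) (hq1 : ∀ x, 1 ≤ q x)
    (hf : AEMeasurable f μ) (h : modular μ q f = 0) : f =ᵐ[μ] 0 := by
  have htop : MeasurableSet {x | q x = ⊤} := hqm (measurableSet_singleton ⊤)
  obtain ⟨hint, hsup⟩ := add_eq_zero.1 h
  rw [lintegral_eq_zero_iff' (hf.restrict.pow hqm.ennreal_toReal.aemeasurable)] at hint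
  rw [essSup_eq_zero_iff] at hsup
  filter_upwards [(ae_restrict_iff' htop.compl).1 hint, (ae_restrict_iff' htop).1 hsup]
    with x hfin hinf
  by_cases hx : q x = ⊤
  · exact hinf hx
  · exact (rpow_eq_zero_iff_of_pos (toReal_pos (one_pos.trans_le (hq1 x)).ne' hx)).1 (hfin hx)

lemma ae_eq_zero_of_luxNorm_eq_zero (hqm : Measurable q) (hq1 : ∀ x, 1 ≤ q x)
    (hf : AEMeasurable f μ) (h : luxNorm μ q f = 0) : f =ᵐ[μ] 0 := by
  refine ae_eq_zero_of_modular_eq_zero hqm hq1 hf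
    (le_antisymm (le_of_forall_gt fun c hc => ?_) zero_le)
  obtain ⟨lam, hlam0, hlam⟩ : ∃ lam, 0 < lam ∧ lam < min c 1 := exists_between (by simpa using hc)
  have hlam1 : lam ≤ 1 := (hlam.trans_le (min_le_right _ _)).le
  calc modular μ q f = modular μ q (fun x => lam * (f x / lam)) := by
        simp_rw [ENNReal.mul_div_cancel hlam0.ne' (ne_top_of_le_ne_top one_ne_top hlam1)]
    _ ≤ lam * modular μ q (fun x => f x / lam) := modular_const_mul_le hqm hq1 hlam1
    _ ≤ lam * 1 := by gcongr; exact modular_div_le_one_of_luxNorm_lt (h ▸ hlam0)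
    _ < c := by simpa using hlam.trans_le (min_le_left _ _)

lemma luxNorm_indicator_inv_ne_zero (hqm : Measurable q) (hq1 : ∀ x, 1 ≤ q x) {w : X → ℝ≥0∞}
    (hwm : AEMeasurable w μ) (hw : ∀ᵐ x ∂μ, w x < ⊤) {B : Set X} (hB : MeasurableSet B)
    (hμB : μ B ≠ 0) : luxNorm μ q (B.indicator fun x => (w x)⁻¹) ≠ 0 := by
  intro h
  refine hμB (measure_eq_zero_iff_ae_notMem.2 ?_)
  filter_upwards [hw, ae_eq_zero_of_luxNorm_eq_zero hqm hq1 (hwm.inv.indicator hB) h]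
    with x hwx hzero hxB
  rw [Set.indicator_of_mem hxB] at hzero
  exact hwx.ne (ENNReal.inv_eq_zero.1 hzero)

end Modular

section RealExponent

variable {μ : Measure X} {p : X → ℝ} {P : ℝ} {f : X → ℝ≥0∞}

lemma measurable_ofRealExp (hp : Measurable p) : Measurable (ofRealExp p) :=
  hp.ennreal_ofReal

lemma one_le_ofRealExp {α : Type*} {p : α → ℝ} {x : α} (hp : 1 ≤ p x) : 1 ≤ ofRealExp p x :=
  one_le_ofReal.2 hp

lemma modular_ofRealExp (hp : ∀ x, 0 ≤ p x) :
    modular μ (ofRealExp p) f = ∫⁻ x, f x ^ p x ∂μ := by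
  simp [modular, ofRealExp, toReal_ofReal (hp _)]

lemma modular_ofRealExp_indicator (hp : ∀ x, 0 < p x) {S : Set X} (hS : MeasurableSet S) :
    modular μ (ofRealExp p) (S.indicator f) = ∫⁻ x in S, f x ^ p x ∂μ := by
  rw [modular_ofRealExp fun x => (hp x).le, ← lintegral_indicator hS]
  congr with x
  by_cases hx : x ∈ S <;> simp [hx, hp x]

lemma modular_const_mul_le_rpow (hp : ∀ x, 0 ≤ p x) (hP : ∀ x, p x ≤ P) {c : ℝ≥0∞} (hc1 : 1 ≤ c)
    (hc : c ≠ ⊤) :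
    modular μ (ofRealExp p) (fun x => c * f x) ≤ c ^ P * modular μ (ofRealExp p) f := by
  have hcP : c ^ P ≠ ⊤ := rpow_ne_top_of_ne_zero (one_pos.trans_le hc1).ne' hc
  rw [modular_ofRealExp hp, modular_ofRealExp hp, ← lintegral_const_mul' _ _ hcP]
  gcongr with x
  rw [mul_rpow_of_nonneg _ _ (hp x)]
  exact mul_le_mul_left (rpow_le_rpow_of_exponent_le hc1 (hP x)) _

lemma modular_le_rpow_of_luxNorm_lt (hp : ∀ x, 0 ≤ p x) (hP : ∀ x, p x ≤ P) {t : ℝ≥0∞}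
    (ht1 : 1 ≤ t) (ht : t ≠ ⊤) (h : luxNorm μ (ofRealExp p) f < t) :
    modular μ (ofRealExp p) f ≤ t ^ P := by
  calc modular μ (ofRealExp p) f = modular μ (ofRealExp p) (fun x => t * (f x / t)) := by
        simp_rw [ENNReal.mul_div_cancel (one_pos.trans_le ht1).ne' ht]
    _ ≤ t ^ P * modular μ (ofRealExp p) (fun x => f x / t) :=
        modular_const_mul_le_rpow hp hP ht1 ht
    _ ≤ t ^ P := mul_le_of_le_one_right' (modular_div_le_one_of_luxNorm_lt h)

lemma modular_div_le_rpow_mul (hp : ∀ x, 0 ≤ p x) (hP : ∀ x, p x ≤ P) {c : ℝ≥0∞} (hc1 : 1 ≤ c)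
    (hc : c ≠ ⊤) (lam : ℝ≥0∞) :
    modular μ (ofRealExp p) (fun x => f x / lam) ≤
      c ^ P * modular μ (ofRealExp p) (fun x => f x / (c * lam)) := by
  convert modular_const_mul_le_rpow hp hP hc1 hc using 3 with x
  rw [← mul_div_assoc, ENNReal.mul_div_mul_left _ _ (one_pos.trans_le hc1).ne' hc]

lemma modular_div_luxNorm (hp : ∀ x, 0 ≤ p x) (hP : ∀ x, p x ≤ P)
    (h0 : luxNorm μ (ofRealExp p) f ≠ 0) (htop : luxNorm μ (ofRealExp p) f ≠ ⊤) :
    modular μ (ofRealExp p) (fun x => f x / luxNorm μ (ofRealExp p) f) = 1 := by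
  set L := luxNorm μ (ofRealExp p) f
  set J := modular μ (ofRealExp p) (fun x => f x / L)
  have hcont : Tendsto (fun c : ℝ≥0∞ => c ^ P) (𝓝[>] 1) (𝓝 1) := by
    simpa using (ENNReal.continuous_rpow_const (y := P)).tendsto 1 |>.mono_left nhdsWithin_le_nhds
  have hupper : ∀ᶠ c : ℝ≥0∞ in 𝓝[>] 1, J ≤ c ^ P := by
    filter_upwards [Ioo_mem_nhdsGT one_lt_top] with c ⟨hc1, hc⟩
    have hlt : L < c * L := by simpa using ENNReal.mul_lt_mul_left h0 htop hc1
    exact (modular_div_le_rpow_mul hp hP hc1.le hc.ne L).trans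
      (mul_le_of_le_one_right' (modular_div_le_one_of_luxNorm_lt hlt))
  have hlower : ∀ᶠ c : ℝ≥0∞ in 𝓝[>] 1, 1 ≤ c ^ P * J := by
    filter_upwards [Ioo_mem_nhdsGT one_lt_top] with c ⟨hc1, hc⟩
    have hlt : L / c < L :=
      ENNReal.div_lt_of_lt_mul (by simpa using ENNReal.mul_lt_mul_right h0 htop hc1)
    have hle := modular_div_le_rpow_mul (μ := μ) (f := f) hp hP hc1.le hc.ne (L / c)
    rw [ENNReal.mul_div_cancel (one_pos.trans hc1).ne' hc.ne] at hle
    exact (one_lt_modular_div_of_lt_luxNorm (ENNReal.div_pos h0 hc.ne) hlt).le.trans hle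
  refine le_antisymm (ge_of_tendsto hcont hupper) (ge_of_tendsto ?_ hlower)
  simpa using ENNReal.Tendsto.mul_const hcont (b := J) (by simp)

end RealExponent

lemma one_le_conjExp {α : Type*} {q : α → ℝ≥0∞} {x : α} (hq : 1 ≤ q x) : 1 ≤ conjExp q x := by
  unfold conjExp
  split_ifs with hx
  · exact le_rfl
  · rcases eq_or_ne (q x - 1) 0 with h0 | h0
    · simp [h0, ENNReal.div_zero (one_pos.trans_le hq).ne']
    · rw [ENNReal.le_div_iff_mul_le (.inl h0) (.inl (by simp [hx])), one_mul]
      exact tsub_le_self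

lemma measurable_conjExp {q : X → ℝ≥0∞} (hq : Measurable q) : Measurable (conjExp q) :=
  Measurable.ite (hq (measurableSet_singleton ⊤)) measurable_const (by fun_prop)

section LogHolder

variable {α : Type*} {d : α → α → ℝ} {x₀ : α} {p : α → ℝ} {pinf : ℝ}

lemma one_le_log_exp_one_add {t : ℝ} (ht : 0 ≤ t) : 1 ≤ Real.log (Real.exp 1 + t) := by
  rw [Real.le_log_iff_exp_le (by positivity)]
  linarith

lemma LHinf.exists_le (hp : LHinf d x₀ p pinf) (hd : ∀ x y, 0 ≤ d x y) :
    ∃ P : ℝ, ∀ x, p x ≤ P := by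
  obtain ⟨C, hC, hbound⟩ := hp
  refine ⟨pinf + C, fun x => ?_⟩
  have hosc : |p x - pinf| ≤ C :=
    (hbound x).trans (div_le_self hC.le (one_le_log_exp_one_add (hd x x₀)))
  linarith [le_abs_self (p x - pinf)]

lemma LHinf.exists_rpow_abs_sub_le (hp : LHinf d x₀ p pinf) (hd : ∀ x y, 0 ≤ d x y)
    {k : ℝ} (hk : 0 ≤ k) :
    ∃ H : ℝ≥0, 1 ≤ H ∧ ∀ (L : ℝ≥0) (x : α), 1 ≤ L →
      Real.log L ≤ k * Real.log (Real.exp 1 + d x x₀) → (L : ℝ≥0∞) ^ |p x - pinf| ≤ H := by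
  obtain ⟨C, hC, hbound⟩ := hp
  refine ⟨(Real.exp (k * C)).toNNReal, Real.one_le_toNNReal.2 (Real.one_le_exp (by positivity)),
    fun L x hL hlog => ?_⟩
  have hone := one_le_log_exp_one_add (hd x x₀)
  have hexp : Real.log L * |p x - pinf| ≤ k * C := by
    calc Real.log L * |p x - pinf|
        ≤ (k * Real.log (Real.exp 1 + d x x₀)) * (C / Real.log (Real.exp 1 + d x x₀)) := by
          gcongr
          exact hbound x
      _ = k * C := by field_simp
  rw [← coe_rpow_of_nonneg _ (abs_nonneg _), ENNReal.coe_le_coe, ← NNReal.coe_le_coe,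
    NNReal.coe_rpow, Real.coe_toNNReal _ (Real.exp_pos _).le,
    Real.rpow_def_of_pos (by exact_mod_cast one_pos.trans_le hL)]
  exact Real.exp_le_exp.2 hexp

end LogHolder

section Doubling

variable {d : X → X → ℝ} {μ : Measure X} {A₀ Cμ : ℝ}

lemma IsSHT.measure_ball_two_pow_mul_le (hX : IsSHT d μ A₀ Cμ) (x : X) {r : ℝ} (hr : 0 < r)
    (n : ℕ) : μ (ball d x (2 ^ n * r)) ≤ ENNReal.ofReal Cμ ^ n * μ (ball d x r) := by
  induction n with
  | zero => simp
  | succ n ih =>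
    rw [pow_succ', pow_succ', mul_assoc, mul_assoc]
    exact (hX.doubling _ _ (by positivity)).trans (by gcongr)

lemma ball_subset_ball {α : Type*} {d : α → α → ℝ} {x : α} {r s : ℝ} (h : r ≤ s) :
    ball d x r ⊆ ball d x s :=
  fun _ hy => lt_of_lt_of_le hy h

lemma IsSHT.exists_measure_ball_mul_le (hX : IsSHT d μ A₀ Cμ) :
    ∃ N : ℕ, ∀ (x : X) (r t : ℝ), 0 < r → 1 ≤ t →
      μ (ball d x (t * r)) ≤ ENNReal.ofReal Cμ * ENNReal.ofReal t ^ N * μ (ball d x r) := by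
  obtain ⟨N, hN⟩ := pow_unbounded_of_one_lt Cμ one_lt_two
  refine ⟨N, fun x r t hr ht => ?_⟩
  obtain ⟨n, hnt, htn⟩ := exists_nat_pow_near ht one_lt_two
  have hC0 : 0 ≤ Cμ := zero_le_one.trans hX.one_le_Cμ
  have hpow : Cμ ^ n ≤ t ^ N :=
    calc Cμ ^ n ≤ (2 ^ N) ^ n := by gcongr
      _ = (2 ^ n) ^ N := pow_right_comm _ _ _
      _ ≤ t ^ N := by gcongr
  calc μ (ball d x (t * r)) ≤ μ (ball d x (2 ^ (n + 1) * r)) := by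
        gcongr
        exact ball_subset_ball (by gcongr)
    _ ≤ ENNReal.ofReal Cμ ^ (n + 1) * μ (ball d x r) := hX.measure_ball_two_pow_mul_le x hr _
    _ ≤ ENNReal.ofReal Cμ * ENNReal.ofReal t ^ N * μ (ball d x r) := by
        rw [pow_succ', ← ofReal_pow hC0, ← ofReal_pow (by positivity)]
        gcongr

end Doubling

section Weight

variable {d : X → X → ℝ} {μ : Measure X} {A₀ Cμ : ℝ} {q : X → ℝ≥0∞} {w : X → ℝ≥0∞}

lemma Apvar.exists_luxNorm_ball_le (hap : Apvar d μ q w) (hX : IsSHT d μ A₀ Cμ)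
    (hqm : Measurable q) (hq1 : ∀ x, 1 ≤ q x) (hw : IsWeight d μ w) (x₀ : X) :
    ∃ (D : ℝ≥0) (N : ℕ), ∀ R : ℝ, 1 ≤ R →
      luxNorm μ q ((ball d x₀ R).indicator w) ≤ D * ENNReal.ofReal R ^ N := by
  obtain ⟨K, hK⟩ := hap
  obtain ⟨N, hN⟩ := hX.exists_measure_ball_mul_le
  obtain ⟨hwm, hwpos, -⟩ := hw
  set dual : ℝ → ℝ≥0∞ := fun R =>
    luxNorm μ (conjExp q) ((ball d x₀ R).indicator fun x => (w x)⁻¹)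
  have hdual : dual 1 ≠ 0 :=
    luxNorm_indicator_inv_ne_zero (measurable_conjExp hqm) (fun x => one_le_conjExp (hq1 x))
      hwm.aemeasurable (hwpos.mono fun _ hx => hx.2) (hX.measurableSet_ball _ _)
      (hX.ball_pos x₀ 1 one_pos).ne'
  set V : ℝ≥0∞ := K * (ENNReal.ofReal Cμ * μ (ball d x₀ 1))
  have hV : V ≠ ⊤ := by finiteness [hX.ball_ne_top x₀ 1 one_pos]
  refine ⟨(V / dual 1).toNNReal, N, fun R hR => ?_⟩
  have hprod : luxNorm μ q ((ball d x₀ R).indicator w) * dual 1 ≤ V * ENNReal.ofReal R ^ N :=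
    calc luxNorm μ q ((ball d x₀ R).indicator w) * dual 1
        ≤ luxNorm μ q ((ball d x₀ R).indicator w) * dual R := by
          gcongr
          exact luxNorm_mono
            (Set.indicator_le_indicator_of_subset (ball_subset_ball hR) fun _ => zero_le)
      _ ≤ K * μ (ball d x₀ R) := hK x₀ R (by positivity)
      _ ≤ K * (ENNReal.ofReal Cμ * ENNReal.ofReal R ^ N * μ (ball d x₀ 1)) := by
          gcongr
          simpa using hN x₀ 1 R one_pos hR
      _ = V * ENNReal.ofReal R ^ N := by ring
  rw [coe_toNNReal (div_ne_top hV hdual), ENNReal.mul_comm_div, ← mul_div_assoc,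
    ENNReal.le_div_iff_mul_le (.inl hdual) (.inr (by finiteness))]
  exact hprod

end Weight

section Growth

variable {d : X → X → ℝ} {μ : Measure X} {A₀ Cμ : ℝ} {x₀ : X} {p : X → ℝ} {pinf P : ℝ}
  {w : X → ℝ≥0∞}

lemma exists_lintegral_ball_le_of_luxNorm_le (hX : IsSHT d μ A₀ Cμ) (hp : ∀ x, 0 < p x)
    (hP : ∀ x, p x ≤ P) {D : ℝ≥0} {N : ℕ}
    (hgrowth : ∀ R : ℝ, 1 ≤ R →
      luxNorm μ (ofRealExp p) ((ball d x₀ R).indicator w) ≤ D * ENNReal.ofReal R ^ N) :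
    ∃ (A : ℝ≥0) (β : ℝ), ∀ R : ℝ, 1 ≤ R →
      ∫⁻ x in ball d x₀ R, w x ^ p x ∂μ ≤ A * ENNReal.ofReal R ^ β := by
  refine ⟨(D + 1) ^ P, N * P, fun R hR => ?_⟩
  have hR1 : 1 ≤ ENNReal.ofReal R ^ N := one_le_pow₀ (one_le_ofReal.2 hR)
  have hlt : luxNorm μ (ofRealExp p) ((ball d x₀ R).indicator w) <
      (D + 1) * ENNReal.ofReal R ^ N := by
    rw [add_mul, one_mul]
    exact (hgrowth R hR).trans_lt (lt_add_right (by finiteness) (one_pos.trans_le hR1).ne')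
  rw [← modular_ofRealExp_indicator hp (hX.measurableSet_ball x₀ R)]
  calc modular μ (ofRealExp p) ((ball d x₀ R).indicator w)
      ≤ ((D + 1) * ENNReal.ofReal R ^ N) ^ P :=
        modular_le_rpow_of_luxNorm_lt (fun x => (hp x).le) hP (one_le_mul le_add_self hR1)
          (by finiteness) hlt
    _ = ((D + 1) ^ P : ℝ≥0) * ENNReal.ofReal R ^ (N * P) := by
        rw [mul_rpow_of_ne_top (by finiteness) (by finiteness), ENNReal.rpow_mul,
          ENNReal.rpow_natCast, coe_rpow_of_ne_zero (by positivity), coe_add, ENNReal.coe_one]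

lemma exists_radius_of_le_mul_rpow {V : ℝ → ℝ≥0∞} {A : ℝ≥0} {β : ℝ}
    (hV : ∀ R : ℝ, 1 ≤ R → V R ≤ A * ENNReal.ofReal R ^ β) :
    ∃ k : ℝ, 0 ≤ k ∧ ∀ L : ℝ≥0, 1 ≤ L → Real.log L ≤ k ∨
      ∃ R : ℝ, 1 ≤ R ∧ V R ≤ L / 2 ∧ Real.log L ≤ k * Real.log (Real.exp 1 + R) := by
  set a : ℝ≥0 := max A 1
  set b : ℝ := max β 1
  have ha : 1 ≤ a := le_max_right _ _
  have hb : 0 < b := one_pos.trans_le (le_max_right _ _)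
  have ha' : 0 ≤ Real.log (2 * a) := Real.log_nonneg (by norm_cast; linarith)
  refine ⟨Real.log (2 * a) + b, by positivity, fun L hL => ?_⟩
  rcases le_total L (2 * a) with hLa | hLa
  · left
    have : Real.log L ≤ Real.log (2 * a) := Real.log_le_log (by positivity) (by exact_mod_cast hLa)
    linarith
  right
  set R : ℝ≥0 := (L / (2 * a)) ^ b⁻¹
  have hRb : R ^ b = L / (2 * a) := NNReal.rpow_inv_rpow hb.ne' _
  have hR : 1 ≤ R := NNReal.one_le_rpow ((one_le_div (by positivity)).2 hLa) (by positivity)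
  refine ⟨R, hR, ?_, ?_⟩
  · calc V R ≤ A * (R : ℝ≥0∞) ^ β := by simpa using hV R hR
      _ ≤ a * (R : ℝ≥0∞) ^ b := by
          gcongr
          · exact le_max_left _ _
          · exact_mod_cast hR
          · exact le_max_left _ _
      _ = (a * R ^ b : ℝ≥0) := by rw [ENNReal.coe_mul, coe_rpow_of_nonneg _ hb.le]
      _ = (L / 2 : ℝ≥0) := by rw [hRb]; congr 1; field_simp
      _ = L / 2 := by simp
  · have hlog : Real.log L = Real.log (2 * a) + b * Real.log R := by
      have hL' : (L : ℝ) = 2 * a * (R : ℝ) ^ b := by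
        rw [← NNReal.coe_rpow, hRb]; push_cast; field_simp
      rw [hL', Real.log_mul (by positivity) (by positivity), Real.log_rpow (by positivity)]
    have hlogR : Real.log R ≤ Real.log (Real.exp 1 + R) :=
      Real.log_le_log (by positivity) (by linarith [Real.exp_pos 1])
    rw [hlog, add_mul]
    exact add_le_add (le_mul_of_one_le_right ha' (one_le_log_exp_one_add R.2)) (by gcongr)

lemma exists_measurableSet_oscillation_le (hX : IsSHT d μ A₀ Cμ) (hLH : LHinf d x₀ p pinf)
    {A : ℝ≥0} {β : ℝ} (hgrowth : ∀ R : ℝ, 1 ≤ R →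
      ∫⁻ x in ball d x₀ R, w x ^ p x ∂μ ≤ A * ENNReal.ofReal R ^ β) :
    ∃ H : ℝ≥0, 1 ≤ H ∧ ∀ L : ℝ≥0, 1 ≤ L → ∃ S : Set X, MeasurableSet S ∧
      ∫⁻ x in S, w x ^ p x ∂μ ≤ L / 2 ∧ ∀ x ∉ S, (L : ℝ≥0∞) ^ |p x - pinf| ≤ H := by
  obtain ⟨k, hk, hradius⟩ := exists_radius_of_le_mul_rpow hgrowth
  obtain ⟨H, hH, hosc⟩ := hLH.exists_rpow_abs_sub_le hX.d_nonneg hk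
  refine ⟨H, hH, fun L hL => ?_⟩
  rcases hradius L hL with hsmall | ⟨R, hR, hint, hlog⟩
  · exact ⟨∅, .empty, by simp, fun x _ => hosc L x hL
      (hsmall.trans (le_mul_of_one_le_right hk (one_le_log_exp_one_add (hX.d_nonneg x x₀))))⟩
  · refine ⟨ball d x₀ R, hX.measurableSet_ball x₀ R, hint, fun x hx => hosc L x hL ?_⟩
    have hRx : R ≤ d x x₀ := hX.d_symm x₀ x ▸ not_lt.1 hx
    refine hlog.trans ?_
    gcongr

end Growth

section Comparison

variable {μ : Measure X} {p : X → ℝ} {pinf : ℝ} {f : X → ℝ≥0∞} {L : ℝ≥0∞} {H : ℝ≥0}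

lemma rpow_mul_div_rpow {t : ℝ≥0∞} {s : ℝ} (hL0 : L ≠ 0) (hL : L ≠ ⊤) (hs : 0 ≤ s) :
    L ^ s * (t / L) ^ s = t ^ s := by
  rw [← mul_rpow_of_nonneg _ _ hs, ENNReal.mul_div_cancel hL0 hL]

lemma mul_lintegral_div_rpow_le (hp1 : ∀ x, 1 ≤ p x) (hL1 : 1 ≤ L) (hL : L ≠ ⊤) :
    L * ∫⁻ x, (f x / L) ^ p x ∂μ ≤ ∫⁻ x, f x ^ p x ∂μ := by
  rw [← lintegral_const_mul' _ _ hL]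
  refine lintegral_mono fun x => ?_
  calc L * (f x / L) ^ p x ≤ L ^ p x * (f x / L) ^ p x :=
        mul_le_mul_left (le_rpow_self_of_one_le hL1 (hp1 x)) _
    _ = f x ^ p x :=
        rpow_mul_div_rpow (one_pos.trans_le hL1).ne' hL (zero_le_one.trans (hp1 x))

lemma lintegral_rpow_le_of_oscillation_le (hp : ∀ x, 0 ≤ p x) (hL1 : 1 ≤ L) (hL : L ≠ ⊤)
    (hosc : ∀ᵐ x ∂μ, L ^ |p x - pinf| ≤ H) :
    ∫⁻ x, f x ^ p x ∂μ ≤ H * L ^ pinf * ∫⁻ x, (f x / L) ^ p x ∂μ := by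
  have hL0 : L ≠ 0 := (one_pos.trans_le hL1).ne'
  have hfin : H * L ^ pinf ≠ ⊤ := mul_ne_top coe_ne_top (rpow_ne_top_of_ne_zero hL0 hL)
  rw [← lintegral_const_mul' _ _ hfin]
  refine lintegral_mono_ae (hosc.mono fun x hx => ?_)
  calc f x ^ p x = L ^ p x * (f x / L) ^ p x := (rpow_mul_div_rpow hL0 hL (hp x)).symm
    _ ≤ L ^ (|p x - pinf| + pinf) * (f x / L) ^ p x := by
        gcongr
        linarith [le_abs_self (p x - pinf)]
    _ ≤ H * L ^ pinf * (f x / L) ^ p x := by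
        rw [ENNReal.rpow_add _ _ hL0 hL]
        gcongr

lemma mul_lintegral_div_rpow_le_of_oscillation_le (hp : ∀ x, 0 ≤ p x) (hL1 : 1 ≤ L) (hL : L ≠ ⊤)
    (hosc : ∀ᵐ x ∂μ, L ^ |p x - pinf| ≤ H) :
    L ^ pinf * ∫⁻ x, (f x / L) ^ p x ∂μ ≤ H * ∫⁻ x, f x ^ p x ∂μ := by
  have hL0 : L ≠ 0 := (one_pos.trans_le hL1).ne'
  rw [← lintegral_const_mul' _ _ (rpow_ne_top_of_ne_zero hL0 hL),
    ← lintegral_const_mul' _ _ coe_ne_top]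
  refine lintegral_mono_ae (hosc.mono fun x hx => ?_)
  calc L ^ pinf * (f x / L) ^ p x ≤ L ^ (|p x - pinf| + p x) * (f x / L) ^ p x := by
        gcongr
        linarith [neg_abs_le (p x - pinf)]
    _ = L ^ |p x - pinf| * f x ^ p x := by
        rw [ENNReal.rpow_add _ _ hL0 hL, mul_assoc, rpow_mul_div_rpow hL0 hL (hp x)]
    _ ≤ H * f x ^ p x := by gcongr

lemma lintegral_rpow_comparable_of_oscillation_le {S : Set X} (hp1 : ∀ x, 1 ≤ p x) (hL1 : 1 ≤ L)
    (hL : L ≠ ⊤) (hunit : ∫⁻ x, (f x / L) ^ p x ∂μ = 1) (hS : MeasurableSet S)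
    (hfS : ∫⁻ x in S, f x ^ p x ∂μ ≤ L / 2) (hosc : ∀ x ∉ S, L ^ |p x - pinf| ≤ H) :
    ∫⁻ x, f x ^ p x ∂μ ≤ 2 * H * L ^ pinf ∧ L ^ pinf ≤ 2 * H * ∫⁻ x, f x ^ p x ∂μ := by
  have hp : ∀ x, 0 ≤ p x := fun x => zero_le_one.trans (hp1 x)
  have hL0 : L ≠ 0 := (one_pos.trans_le hL1).ne'
  have hosc' : ∀ᵐ x ∂μ.restrict Sᶜ, L ^ |p x - pinf| ≤ H :=
    ae_restrict_of_forall_mem hS.compl hosc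
  set I := fun T : Set X => ∫⁻ x in T, f x ^ p x ∂μ
  set J := fun T : Set X => ∫⁻ x in T, (f x / L) ^ p x ∂μ
  have hI : I S + I Sᶜ = ∫⁻ x, f x ^ p x ∂μ := lintegral_add_compl _ hS
  have hJ : J S + J Sᶜ = 1 := (lintegral_add_compl _ hS).trans hunit
  -- As `p ≥ 1` and `L ≥ 1`, the integrand `f ^ p` dominates `L * (f / L) ^ p`.
  have hJS : J S ≤ 2⁻¹ := by
    rw [← ENNReal.mul_le_mul_iff_right hL0 hL]
    exact (mul_lintegral_div_rpow_le hp1 hL1 hL).trans hfS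
  have hJSc : 1 ≤ 2 * J Sᶜ := by
    rw [← ENNReal.inv_le_iff_le_mul (by simp) (by simp)]
    refine ENNReal.le_of_add_le_add_left (a := 2⁻¹) (by simp) ?_
    rw [ENNReal.inv_two_add_inv_two, ← hJ]
    gcongr
  have hISle : I S ≤ I Sᶜ :=
    calc I S ≤ L / 2 := hfS
      _ ≤ L / 2 * (2 * J Sᶜ) := le_mul_of_one_le_right' hJSc
      _ = L * J Sᶜ := by rw [← mul_assoc, ENNReal.div_mul_cancel two_ne_zero ofNat_ne_top]
      _ ≤ I Sᶜ := mul_lintegral_div_rpow_le hp1 hL1 hL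
  have hJle : J Sᶜ ≤ 1 := hJ ▸ le_add_self
  rw [← hI]
  constructor
  · calc I S + I Sᶜ ≤ 2 * I Sᶜ := by rw [two_mul]; gcongr
      _ ≤ 2 * (H * L ^ pinf * J Sᶜ) := by
          gcongr
          exact lintegral_rpow_le_of_oscillation_le hp hL1 hL hosc'
      _ ≤ 2 * (H * L ^ pinf * 1) := by gcongr
      _ = 2 * H * L ^ pinf := by ring
  · calc L ^ pinf ≤ L ^ pinf * (2 * J Sᶜ) := le_mul_of_one_le_right' hJSc
      _ = 2 * (L ^ pinf * J Sᶜ) := by ring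
      _ ≤ 2 * (H * I Sᶜ) := by
          gcongr 2 * ?_
          exact mul_lintegral_div_rpow_le_of_oscillation_le hp hL1 hL hosc'
      _ ≤ 2 * H * (I S + I Sᶜ) := by
          rw [mul_assoc]
          gcongr
          exact le_add_self

end Comparison

lemma rpow_le_rpow_of_nonpos {a b : ℝ≥0∞} {s : ℝ} (hs : s ≤ 0) (h : a ≤ b) : b ^ s ≤ a ^ s := by
  rw [← neg_neg s, ENNReal.rpow_neg b, ENNReal.rpow_neg a, ENNReal.inv_le_inv]
  exact rpow_le_rpow h (neg_nonneg.2 hs)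

lemma rpow_le_one_of_one_le_of_nonpos {a : ℝ≥0∞} {s : ℝ} (ha : 1 ≤ a) (hs : s ≤ 0) : a ^ s ≤ 1 :=
  (rpow_le_rpow_of_nonpos hs ha).trans_eq (one_rpow s)

lemma exists_rpow_one_div_comparable (s : ℝ) {C : ℝ≥0} (hC : 1 ≤ C) :
    ∃ K : ℝ≥0, 0 < K ∧ ∀ a b : ℝ≥0∞, 1 ≤ b → b ≤ a → a ≤ C * b ^ s → b ^ s ≤ C * a →
      a ^ (1 / s) ≤ K * b ∧ b ≤ K * a ^ (1 / s) := by
  have hC0 : 0 < C := one_pos.trans_le hC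
  rcases lt_or_ge 0 s with hs | hs
  · have hroot : ∀ b : ℝ≥0∞, (b ^ s) ^ (1 / s) = b := fun b => by
      rw [← ENNReal.rpow_mul, mul_one_div_cancel hs.ne', ENNReal.rpow_one]
    have hmul : ∀ a : ℝ≥0∞, (C * a) ^ (1 / s) = (C ^ (1 / s) : ℝ≥0) * a ^ (1 / s) := fun a => by
      rw [mul_rpow_of_nonneg _ _ (by positivity), coe_rpow_of_nonneg _ (by positivity)]
    refine ⟨C ^ (1 / s), by positivity, fun a b _ _ hab hba => ⟨?_, ?_⟩⟩
    · calc a ^ (1 / s) ≤ (C * b ^ s) ^ (1 / s) := by gcongr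
        _ = (C ^ (1 / s) : ℝ≥0) * b := by rw [hmul, hroot]
    · calc b = (b ^ s) ^ (1 / s) := (hroot b).symm
        _ ≤ (C * a) ^ (1 / s) := by gcongr
        _ = (C ^ (1 / s) : ℝ≥0) * a ^ (1 / s) := hmul a
  · -- The hypotheses force `1 ≤ b ≤ a ≤ C`; this includes `s = 0`, where `1 / s = 0`.
    have hs' : 1 / s ≤ 0 := one_div_nonpos.2 hs
    refine ⟨C ^ (1 - 1 / s), by positivity, fun a b hb hba hab _ => ⟨?_, ?_⟩⟩
    · calc a ^ (1 / s) ≤ 1 := rpow_le_one_of_one_le_of_nonpos (hb.trans hba) hs'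
        _ ≤ (C ^ (1 - 1 / s) : ℝ≥0) * b :=
          one_le_mul (by exact_mod_cast NNReal.one_le_rpow hC (by linarith)) hb
    · have haC : a ≤ C :=
        hab.trans (mul_le_of_le_one_right' (rpow_le_one_of_one_le_of_nonpos hb hs))
      calc b ≤ C := hba.trans haC
        _ = (C ^ (1 - 1 / s) : ℝ≥0) * (C : ℝ≥0∞) ^ (1 / s) := by
          rw [coe_rpow_of_ne_zero hC0.ne', ← ENNReal.rpow_add _ _ (by positivity) coe_ne_top]
          simp
        _ ≤ (C ^ (1 - 1 / s) : ℝ≥0) * a ^ (1 / s) := by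
          gcongr _ * ?_
          exact rpow_le_rpow_of_nonpos hs' haC

section Main

variable {d : X → X → ℝ} {μ : Measure X} {A₀ Cμ : ℝ} {x₀ : X} {p : X → ℝ} {pinf : ℝ}
  {w : X → ℝ≥0∞}

lemma Apvar.luxNorm_indicator_ball_ne_top (hap : Apvar d μ (ofRealExp p) w)
    (hX : IsSHT d μ A₀ Cμ) (hpmeas : Measurable p) (hp1 : ∀ x, 1 ≤ p x) (hw : IsWeight d μ w)
    (z : X) (r : ℝ) : luxNorm μ (ofRealExp p) ((ball d z r).indicator w) ≠ ⊤ := by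
  obtain ⟨D, N, hgrowth⟩ := hap.exists_luxNorm_ball_le hX (measurable_ofRealExp hpmeas)
    (fun x => one_le_ofRealExp (hp1 x)) hw z
  have hsub := ball_subset_ball (d := d) (x := z) (le_max_left r 1)
  exact ne_top_of_le_ne_top (by finiteness)
    ((luxNorm_mono (Set.indicator_le_indicator_of_subset hsub fun _ => zero_le)).trans
      (hgrowth _ (le_max_right r 1)))

theorem luxNorm_eq_W_rpow_general (hX : IsSHT d μ A₀ Cμ) (hpmeas : Measurable p)
    (hp1 : ∀ x, 1 ≤ p x) (hLHinf : LHinf d x₀ p pinf) (hw : IsWeight d μ w)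
    (hap : Apvar d μ (ofRealExp p) w) :
    ∃ c C : ℝ≥0, 0 < c ∧ 0 < C ∧ ∀ E : Set X, MeasurableSet E →
      1 ≤ luxNorm μ (ofRealExp p) (E.indicator w) → luxNorm μ (ofRealExp p) (E.indicator w) ≠ ⊤ →
      c * (∫⁻ x in E, w x ^ p x ∂μ) ^ (1 / pinf) ≤ luxNorm μ (ofRealExp p) (E.indicator w) ∧
        luxNorm μ (ofRealExp p) (E.indicator w) ≤
          C * (∫⁻ x in E, w x ^ p x ∂μ) ^ (1 / pinf) := by
  have hp : ∀ x, 0 < p x := fun x => one_pos.trans_le (hp1 x)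
  have hp0 : ∀ x, 0 ≤ p x := fun x => (hp x).le
  obtain ⟨P, hP⟩ := hLHinf.exists_le hX.d_nonneg
  obtain ⟨D, N, hnorm⟩ := hap.exists_luxNorm_ball_le hX (measurable_ofRealExp hpmeas)
    (fun x => one_le_ofRealExp (hp1 x)) hw x₀
  obtain ⟨A, β, hmass⟩ := exists_lintegral_ball_le_of_luxNorm_le hX hp hP hnorm
  obtain ⟨H, hH, hosc⟩ := exists_measurableSet_oscillation_le hX hLHinf hmass
  obtain ⟨K, hK, hroot⟩ := exists_rpow_one_div_comparable pinf (C := 2 * H)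
    (one_le_mul one_le_two hH)
  refine ⟨K⁻¹, K, by positivity, hK, fun E hE hL1 hL => ?_⟩
  have hunit := modular_div_luxNorm hp0 hP (one_pos.trans_le hL1).ne' hL
  rw [← modular_ofRealExp_indicator hp hE]
  set f := E.indicator w
  have hfw : f ≤ w := Set.indicator_le_self' fun _ _ => zero_le
  rw [modular_ofRealExp hp0] at hunit ⊢
  lift luxNorm μ (ofRealExp p) f to ℝ≥0 using hL with L
  obtain ⟨S, hS, hwS, hoscS⟩ := hosc L (by exact_mod_cast hL1)
  have hfS : ∫⁻ x in S, f x ^ p x ∂μ ≤ L / 2 :=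
    (lintegral_mono fun x => rpow_le_rpow (hfw x) (hp0 x)).trans hwS
  obtain ⟨hupper, hlower⟩ :=
    lintegral_rpow_comparable_of_oscillation_le hp1 hL1 coe_ne_top hunit hS hfS hoscS
  have hle : (L : ℝ≥0∞) ≤ ∫⁻ x, f x ^ p x ∂μ := by
    simpa [hunit] using mul_lintegral_div_rpow_le (f := f) (μ := μ) hp1 hL1 coe_ne_top
  obtain ⟨hlow, hup⟩ := hroot _ _ hL1 hle (by exact_mod_cast hupper) (by exact_mod_cast hlower)
  refine ⟨?_, hup⟩
  rwa [coe_inv hK.ne', ENNReal.inv_mul_le_iff (by positivity) coe_ne_top]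

end Main

theorem luxNorm_eq_W_rpow
    {X : Type*} [MeasurableSpace X] (d : X → X → ℝ) (μ : Measure X) (A₀ Cμ : ℝ)
    (hX : IsSHT d μ A₀ Cμ) (x₀ : X)
    (p : X → ℝ) (hpmeas : Measurable p) (hp1 : ∀ x, 1 ≤ p x)
    (pinf : ℝ) (hLH0 : LH0 d p) (hLHinf : LHinf d x₀ p pinf)
    (w : X → ℝ≥0∞) (hw : IsWeight d μ w) (hap : Apvar d μ (ofRealExp p) w) :
    ∃ c C : ℝ≥0, 0 < c ∧ 0 < C ∧ ∀ (z : X) (rad : ℝ), 0 < rad →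
      1 ≤ luxNorm μ (ofRealExp p) ((ball d z rad).indicator w) →
      c * (∫⁻ x in ball d z rad, w x ^ p x ∂μ) ^ (1 / pinf) ≤
          luxNorm μ (ofRealExp p) ((ball d z rad).indicator w) ∧
        luxNorm μ (ofRealExp p) ((ball d z rad).indicator w) ≤
          C * (∫⁻ x in ball d z rad, w x ^ p x ∂μ) ^ (1 / pinf) := by
  obtain ⟨c, C, hc, hC, h⟩ := luxNorm_eq_W_rpow_general hX hpmeas hp1 hLHinf hw hap
  exact ⟨c, C, hc, hC, fun z rad _ hL1 => h _ (hX.measurableSet_ball z rad) hL1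
    (hap.luxNorm_indicator_ball_ne_top hX hpmeas hp1 hw z rad)⟩

end SHT
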